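/- arXiv:0903.2508 — 2 statements merged into one kernel-verified Lean document; each statement's English description precedes it below -/
import Mathlib

section
/- Let q be a power of an odd prime and let A, B ⊆ F_q be subsets with |A|·|B| > q·(√q + 1). Then the product set A·B = {a·b : a ∈ A, b ∈ B} contains a nontrivial three-term arithmetic progression; that is, there exist u, v, w ∈ A·B with u + w = 2v, u ≠ v, and w ≠ v. -/
open Pointwise

/-!
By symmetry assume `|B| ≤ |A|`, and fix a nonzero `c ∈ B`. Every solution of
`a * b + c * a₁ = 2 * (c * a₂)` with `a, a₁, a₂ ∈ A`, `b ∈ B` gives a progression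
`a * b, c * a₂, c * a₁` in `A * B`, which is trivial only if `c * a₁ = a * b`; so there are at most
`|A| |B|` trivial solutions.

The number of all solutions is controlled by the sum-product estimate
`(N - |A| |B| |C| |D| / q)² ≤ q |A| |B| |C| |D|` for the number `N` of solutions of `a * b + y = d`
in `A × B × C × D` (`solutionCount_sub_sq_le`), applied with `C = c • A` and `D = (2 * c) • A`.
This estimate is a Cauchy–Schwarz argument resting on a second moment computation
(`sum_sq_balanced_le`): for `a ≠ a'` the map `(b, y) ↦ (a * b + y, a' * b + y)` is a bijection of
`F²`, so for a mean zero function all off-diagonal terms vanish.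
If all solutions were trivial, then `N ≤ |A| |B|`, contradicting `|A| |B| > q (√q + 1)`.
-/

section SumProduct

variable {F : Type} [Field F] [Fintype F]

/-- Off-diagonal terms vanish: two lines with different slopes give independent values. -/
lemma sum_mul_shear_eq_zero (f : F → ℝ) (hf : ∑ x, f x = 0) {a a' : F} (haa : a ≠ a') :
    ∑ p : F × F, f (a * p.1 + p.2) * f (a' * p.1 + p.2) = 0 := by
  have hsub : a - a' ≠ 0 := sub_ne_zero.mpr haa
  have hinj : Function.Injective (fun p : F × F => (a * p.1 + p.2, a' * p.1 + p.2)) := by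
    rintro ⟨x, y⟩ ⟨x', y'⟩ hp
    simp only [Prod.mk.injEq] at hp
    obtain ⟨h1, h2⟩ := hp
    have hx : x = x' := mul_left_cancel₀ hsub (by linear_combination h1 - h2)
    subst hx
    simpa using h1
  have hbij := Finite.injective_iff_bijective.mp hinj
  rw [hbij.sum_comp (fun p : F × F => f p.1 * f p.2), Fintype.sum_prod_type]
  simp only [← Finset.mul_sum, hf, mul_zero, Finset.sum_const_zero]

lemma sum_sq_line (f : F → ℝ) (a : F) :
    ∑ p : F × F, f (a * p.1 + p.2) * f (a * p.1 + p.2)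
      = (Fintype.card F : ℝ) * ∑ x, f x * f x := by
  rw [Fintype.sum_prod_type]
  have hx : ∀ x : F, ∑ y, f (a * x + y) * f (a * x + y) = ∑ y, f y * f y := fun x =>
    Equiv.sum_comp (Equiv.addLeft (a * x)) (fun y => f y * f y)
  simp [hx]

variable [DecidableEq F]

/-- The indicator function of `D`, shifted to have mean zero. -/
noncomputable def balanced (D : Finset F) (x : F) : ℝ :=
  (if x ∈ D then 1 else 0) - (D.card : ℝ) / Fintype.card F

lemma sum_balanced (D : Finset F) : ∑ x, balanced D x = 0 := by
  have hq : (Fintype.card F : ℝ) ≠ 0 := by exact_mod_cast Fintype.card_ne_zero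
  simp only [balanced, Finset.sum_sub_distrib, Finset.sum_ite_mem, Finset.univ_inter,
    Finset.sum_const, Finset.card_univ, nsmul_eq_mul, mul_one]
  field_simp
  simp

lemma sum_balanced_sq_le (D : Finset F) :
    ∑ x, balanced D x * balanced D x ≤ D.card := by
  have h1 : ∀ x, balanced D x * balanced D x
      = (if x ∈ D then 1 else 0) - (D.card : ℝ) / Fintype.card F * balanced D x
        - (D.card : ℝ) / Fintype.card F * (if x ∈ D then 1 else 0) := by
    intro x
    unfold balanced
    split_ifs <;> ring
  simp only [h1, Finset.sum_sub_distrib, ← Finset.mul_sum, sum_balanced]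
  simp only [Finset.sum_ite_mem, Finset.univ_inter, Finset.sum_const, nsmul_eq_mul, mul_one,
    mul_zero, sub_zero]
  have : (0 : ℝ) ≤ (D.card : ℝ) / Fintype.card F * D.card := by positivity
  linarith

lemma sum_sq_balanced_le (A D : Finset F) :
    ∑ p : F × F, (∑ a ∈ A, balanced D (a * p.1 + p.2)) ^ 2
      ≤ (Fintype.card F : ℝ) * A.card * D.card := by
  have h1 : ∑ p : F × F, (∑ a ∈ A, balanced D (a * p.1 + p.2)) ^ 2
      = ∑ a ∈ A, ∑ a' ∈ A, ∑ p : F × F,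
          balanced D (a * p.1 + p.2) * balanced D (a' * p.1 + p.2) := by
    simp only [sq, Finset.sum_mul_sum]
    rw [Finset.sum_comm]
    refine Finset.sum_congr rfl fun a _ => ?_
    rw [Finset.sum_comm]
  have h2 : ∀ a ∈ A, ∑ a' ∈ A, ∑ p : F × F,
      balanced D (a * p.1 + p.2) * balanced D (a' * p.1 + p.2)
        = (Fintype.card F : ℝ) * ∑ x, balanced D x * balanced D x := by
    intro a ha
    rw [Finset.sum_eq_single_of_mem a ha, sum_sq_line]
    intro a' _ hne
    exact sum_mul_shear_eq_zero _ (sum_balanced D) hne.symm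
  rw [h1, Finset.sum_congr rfl h2, Finset.sum_const, nsmul_eq_mul]
  have := mul_le_mul_of_nonneg_left (sum_balanced_sq_le D)
    (by positivity : (0 : ℝ) ≤ (A.card : ℝ) * Fintype.card F)
  linarith

/-- The number of solutions of `a * b + y = d` with `a ∈ A`, `b ∈ B`, `y ∈ C`, `d ∈ D`,
as a real number. -/
noncomputable def solutionCount (A B C D : Finset F) : ℝ :=
  ∑ p ∈ B ×ˢ C, ∑ a ∈ A, if a * p.1 + p.2 ∈ D then 1 else 0

lemma solutionCount_sub_sq_le (A B C D : Finset F) :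
    (solutionCount A B C D
        - (A.card : ℝ) * B.card * C.card * D.card / Fintype.card F) ^ 2
      ≤ (Fintype.card F : ℝ) * A.card * B.card * C.card * D.card := by
  have h1 : solutionCount A B C D
        - (A.card : ℝ) * B.card * C.card * D.card / Fintype.card F
      = ∑ p ∈ B ×ˢ C, ∑ a ∈ A, balanced D (a * p.1 + p.2) := by
    simp only [solutionCount, balanced, Finset.sum_sub_distrib, Finset.sum_const,
      Finset.card_product, nsmul_eq_mul]
    push_cast
    ring
  rw [h1]
  calc (∑ p ∈ B ×ˢ C, ∑ a ∈ A, balanced D (a * p.1 + p.2)) ^ 2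
      ≤ ((B ×ˢ C).card : ℝ) * ∑ p ∈ B ×ˢ C, (∑ a ∈ A, balanced D (a * p.1 + p.2)) ^ 2 :=
        sq_sum_le_card_mul_sum_sq
    _ ≤ ((B ×ˢ C).card : ℝ) * ∑ p : F × F, (∑ a ∈ A, balanced D (a * p.1 + p.2)) ^ 2 := by
        gcongr
        exact Finset.subset_univ _
    _ ≤ ((B ×ˢ C).card : ℝ) * ((Fintype.card F : ℝ) * A.card * D.card) := by
        gcongr
        exact sum_sq_balanced_le A D
    _ = _ := by
        rw [Finset.card_product]
        push_cast
        ring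

/-- The case `|B| ≤ |A|` of the theorem. -/
lemma exists_progression_of_card_le (hq : Odd (Fintype.card F)) (A B : Finset F)
    (hBA : B.card ≤ A.card)
    (h : (Fintype.card F : ℝ) * (Real.sqrt (Fintype.card F) + 1) <
      (A.card : ℝ) * (B.card : ℝ)) :
    ∃ u ∈ A * B, ∃ v ∈ A * B, ∃ w ∈ A * B, u + w = 2 * v ∧ u ≠ v ∧ w ≠ v := by
  have h2 : (2 : F) ≠ 0 := by
    refine Ring.two_ne_zero fun h => ?_
    have := FiniteField.even_card_of_char_two h
    rw [Nat.odd_iff] at hq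
    omega
  have hq1 : (1 : ℝ) ≤ Fintype.card F := by exact_mod_cast Fintype.card_pos
  have hAq : (A.card : ℝ) ≤ Fintype.card F := by exact_mod_cast A.card_le_univ
  have hBA' : (B.card : ℝ) ≤ A.card := by exact_mod_cast hBA
  have hs := Real.sq_sqrt (by linarith : (0 : ℝ) ≤ Fintype.card F)
  have hs0 := Real.sqrt_nonneg (Fintype.card F : ℝ)
  have hs1 : 1 ≤ Real.sqrt (Fintype.card F : ℝ) := Real.one_le_sqrt.mpr hq1
  obtain ⟨c, hcB, hc⟩ : ∃ c ∈ B, c ≠ 0 := by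
    refine Finset.exists_mem_ne ?_ 0
    have : (1 : ℝ) < B.card := by
      by_contra! hB
      have : (A.card : ℝ) * B.card ≤ Fintype.card F * 1 := by gcongr
      nlinarith
    exact_mod_cast this
  by_contra! hno
  have hcount := solutionCount_sub_sq_le A B (A.image (c * ·)) (A.image (2 * c * ·))
  rw [Finset.card_image_of_injective _ (mul_right_injective₀ hc),
    Finset.card_image_of_injective _ (mul_right_injective₀ (mul_ne_zero h2 hc))] at hcount
  have htriv : solutionCount A B (A.image (c * ·)) (A.image (2 * c * ·))
      ≤ (A.card : ℝ) * B.card := by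
    -- in the absence of nontrivial progressions, `(a, b)` determines `y = a * b`
    have hle : solutionCount A B (A.image (c * ·)) (A.image (2 * c * ·))
        ≤ ∑ p ∈ B ×ˢ A.image (c * ·), ∑ a ∈ A, if p.2 = a * p.1 then (1 : ℝ) else 0 := by
      refine Finset.sum_le_sum fun p hp => Finset.sum_le_sum fun a ha => ?_
      obtain ⟨hb, hy⟩ := Finset.mem_product.mp hp
      obtain ⟨a₁, ha₁, hy⟩ := Finset.mem_image.mp hy
      by_cases hD : a * p.1 + p.2 ∈ A.image (2 * c * ·)
      · obtain ⟨a₂, ha₂, hd⟩ := Finset.mem_image.mp hD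
        have hap : a * p.1 + a₁ * c = 2 * (a₂ * c) := by
          linear_combination hy - hd
        have := hno _ (Finset.mul_mem_mul ha hb) _ (Finset.mul_mem_mul ha₂ hcB) _
          (Finset.mul_mem_mul ha₁ hcB) hap
        have hyab : p.2 = a * p.1 := by
          by_cases hu : a * p.1 = a₂ * c
          · linear_combination hap - 2 * hu - hy
          · linear_combination 2 * this hu - hap - hy
        rw [if_pos hD, if_pos hyab]
      · rw [if_neg hD]
        split_ifs <;> norm_num
    refine hle.trans ?_
    rw [Finset.sum_product]
    calc ∑ b ∈ B, ∑ y ∈ A.image (c * ·), ∑ a ∈ A, (if y = a * b then (1 : ℝ) else 0)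
        ≤ ∑ b ∈ B, (A.card : ℝ) := by
          refine Finset.sum_le_sum fun b _ => ?_
          rw [Finset.sum_comm, Finset.card_eq_sum_ones, Nat.cast_sum]
          refine Finset.sum_le_sum fun a _ => ?_
          rw [Finset.sum_ite_eq']
          split_ifs <;> norm_num
      _ = (A.card : ℝ) * B.card := by
          rw [Finset.sum_const, nsmul_eq_mul, mul_comm]
  generalize solutionCount A B (A.image (c * ·)) (A.image (2 * c * ·)) = N at hcount htriv
  generalize Real.sqrt (Fintype.card F : ℝ) = s at *
  generalize (Fintype.card F : ℝ) = q at *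
  have hm0 : (0 : ℝ) ≤ B.card := by positivity
  generalize (A.card : ℝ) = n at *
  generalize (B.card : ℝ) = m at *
  have hq0 : 0 < q := by linarith
  have hn0 : 0 < n := by nlinarith
  have hm : 0 < m := by nlinarith
  -- `key` rearranges to `n * m < n * m * n * n / q`, with a gap of more than `n * n * s`
  have key : n * q * s < m * (n ^ 2 - q) := by
    nlinarith [mul_lt_mul_of_pos_left h hn0, mul_le_mul_of_nonneg_left hBA' hq0.le]
  have hgap : n * (n * s) < n * m * n * n / q - N := by
    have : n * (n * s) < n * (m * (n ^ 2 - q) / q) := by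
      gcongr
      rw [lt_div_iff₀ hq0]
      linarith
    have e : n * (m * (n ^ 2 - q) / q) = n * m * n * n / q - n * m := by
      field_simp
    linarith
  have hsq : (n * (n * s)) ^ 2 < (n * m * n * n / q - N) ^ 2 := by
    gcongr
  have hfin : q * n * m * n * n ≤ (n * (n * s)) ^ 2 := by
    have : (n * (n * s)) ^ 2 = q * n * n * n * n := by
      rw [← hs]; ring
    rw [this]
    gcongr
  nlinarith

end SumProduct

theorem stmt_13 (F : Type) [Field F] [Fintype F] [DecidableEq F]
    (hq : Odd (Fintype.card F)) (A B : Finset F)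
    (h : (Fintype.card F : ℝ) * (Real.sqrt (Fintype.card F) + 1) <
      (A.card : ℝ) * (B.card : ℝ)) :
    ∃ u ∈ A * B, ∃ v ∈ A * B, ∃ w ∈ A * B, u + w = 2 * v ∧ u ≠ v ∧ w ≠ v := by
  rcases le_total B.card A.card with hBA | hAB
  · exact exists_progression_of_card_le hq A B hBA h
  · rw [mul_comm A B]
    exact exists_progression_of_card_le hq B A hAB (by rwa [mul_comm (B.card : ℝ)])
end

section
/- Let q be a power of an odd prime, let A, B ⊆ F_q be subsets, and let t ∈ F_q with t ≠ 0. Then the number of quadruples (x_0, y_0, x_2, y_2) ∈ A × B × A × B satisfying x_0·y_0 + x_2·y_2 = 2t is at least |A|²·|B|²/q − √q·|A|·|B|. -/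
/-!
Writing `u = (x₀, x₂) ∈ A ×ˢ A` and `v = (y₀, y₂) ∈ B ×ˢ B`, the quadruples are the incidences
`u ⬝ v = s` with `s = 2 t ≠ 0`. Let `f u` be the number of `v ∈ G = B ×ˢ B` with `u ⬝ v = s`, and
let `m` be the number of nonzero vectors of `G`, so that `m ≤ |G| ≤ m + 1`.

For `v ≠ 0` the line `u ⬝ v = s` has exactly `q` points (`card_line`), and since `s ≠ 0` two such
lines with `v ≠ v'` meet in at most one point (`line_inter`). Hence `∑ f = q m` and
`∑ f² ≤ m² + (q - 1) m`, both sums over the whole plane, which gives the variance bound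
`∑ (f - |G| / q)² ≤ (q - 1) m + (|G| - m)² ≤ q |G|` (`variance_bound`). Cauchy–Schwarz over
`u ∈ A ×ˢ A` then bounds the deviation of the number of incidences from `|A|² |B|² / q` by
`√(|A|² · q |B|²)`.
-/

open Finset

/-- Indicator of the incidence `u ⬝ v = s` in the plane `F × F`. -/
noncomputable def inc {F : Type} [Field F] (s : F) (u v : F × F) : ℝ :=
  open Classical in if u.1 * v.1 + u.2 * v.2 = s then 1 else 0

lemma inc_zero {F : Type} [Field F] {s : F} (hs : s ≠ 0) (u : F × F) : inc s u 0 = 0 := by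
  simp [inc, hs.symm]

lemma inc_sq {F : Type} [Field F] (s : F) (u v : F × F) : inc s u v * inc s u v = inc s u v := by
  unfold inc; split_ifs <;> simp

lemma card_line {F : Type} [Field F] [Fintype F] (s : F) (v : F × F) (hv : v ≠ 0) :
    ∑ u : F × F, inc s u v = Fintype.card F := by
  classical
  obtain ⟨a, b⟩ := v
  rw [Fintype.sum_prod_type]
  by_cases ha : a = 0
  · -- The second coordinate is determined by the first.
    have hb : b ≠ 0 := by
      rintro rfl
      exact hv (by simp [ha])
    have h : ∀ x y : F, inc s (x, y) (a, b) = if y = s / b then 1 else 0 := by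
      intro x y
      simp [inc, ha, eq_div_iff hb]
    simp [h]
  · -- The first coordinate is determined by the second.
    rw [Finset.sum_comm]
    have h : ∀ x y : F, inc s (x, y) (a, b) = if x = (s - y * b) / a then 1 else 0 := by
      intro x y
      simp [inc, eq_div_iff ha, eq_sub_iff_add_eq]
    simp [h]

/-- Distinct lines `u ⬝ v = s` and `u ⬝ w = s` with `s ≠ 0` share at most one point: a common point
forces `v` and `w` to be linearly independent. -/
lemma line_inter {F : Type} [Field F] [Fintype F] {s : F} (hs : s ≠ 0) (v w : F × F)
    (hvw : v ≠ w) : ∑ u : F × F, inc s u v * inc s u w ≤ 1 := by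
  classical
  obtain ⟨a, b⟩ := v
  obtain ⟨c, d⟩ := w
  have h : ∀ u : F × F, inc s u (a, b) * inc s u (c, d) =
      if u.1 * a + u.2 * b = s ∧ u.1 * c + u.2 * d = s then 1 else 0 := by
    intro u
    simp only [inc]
    split_ifs <;> simp_all
  simp only [h, Finset.sum_boole]
  norm_cast
  rw [Finset.card_le_one]
  rintro ⟨x, y⟩ h1 ⟨x', y'⟩ h2
  simp only [mem_filter, mem_univ, true_and] at h1 h2
  obtain ⟨h1, h1'⟩ := h1
  obtain ⟨h2, h2'⟩ := h2
  have hdet : a * d - b * c ≠ 0 := by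
    intro h0
    apply hvw
    have e1 : s * (d - b) = 0 := by linear_combination x * h0 - d * h1 + b * h1'
    have e2 : s * (a - c) = 0 := by linear_combination y * h0 - a * h1' + c * h1
    simp only [mul_eq_zero, hs, false_or, sub_eq_zero] at e1 e2
    rw [e1, e2]
  have e1 : (a * d - b * c) * (x - x') = 0 := by
    linear_combination d * h1 - b * h1' - d * h2 + b * h2'
  have e2 : (a * d - b * c) * (y - y') = 0 := by
    linear_combination a * h1' - c * h1 - a * h2' + c * h2
  simp only [mul_eq_zero, hdet, false_or, sub_eq_zero] at e1 e2
  rw [e1, e2]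

lemma variance_bound {F : Type} [Field F] [Fintype F] {s : F} (hs : s ≠ 0) (G : Finset (F × F)) :
    ∑ u : F × F, (∑ v ∈ G, inc s u v - (G.card : ℝ) / Fintype.card F) ^ 2 ≤
      Fintype.card F * G.card := by
  classical
  set q : ℝ := (Fintype.card F : ℝ) with hq
  set n : ℝ := (G.card : ℝ) with hn
  set m : ℝ := ((G.erase 0).card : ℝ) with hm
  have hq1 : 1 ≤ q := by
    rw [hq]; exact_mod_cast (Fintype.card_pos : 0 < Fintype.card F)
  have hmn : m ≤ n := by
    rw [hm, hn]; exact_mod_cast Finset.card_erase_le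
  have hnm : n ≤ m + 1 := by
    rw [hm, hn]; exact_mod_cast Nat.sub_le_iff_le_add.1 Finset.pred_card_le_card_erase
  have hm0 : 0 ≤ m := by rw [hm]; positivity
  -- The zero vector has no incidences, as `s ≠ 0`.
  have hf : ∀ u, ∑ v ∈ G, inc s u v = ∑ v ∈ G.erase 0, inc s u v := fun u =>
    (Finset.sum_erase G (inc_zero hs u)).symm
  simp only [hf]
  have h1 : ∑ u : F × F, ∑ v ∈ G.erase 0, inc s u v = q * m := by
    rw [Finset.sum_comm, Finset.sum_congr rfl
      (fun v hv => card_line s v (Finset.ne_of_mem_erase hv))]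
    simp [hm, hq, mul_comm]
  have h2 : ∑ u : F × F, (∑ v ∈ G.erase 0, inc s u v) ^ 2 ≤ m ^ 2 + (q - 1) * m := by
    calc ∑ u : F × F, (∑ v ∈ G.erase 0, inc s u v) ^ 2
        = ∑ v ∈ G.erase 0, ∑ w ∈ G.erase 0, ∑ u : F × F, inc s u v * inc s u w := by
          simp only [sq, Finset.sum_mul_sum]
          rw [Finset.sum_comm]
          exact Finset.sum_congr rfl fun v _ => Finset.sum_comm
      _ ≤ ∑ v ∈ G.erase 0, ∑ w ∈ G.erase 0, (1 + if v = w then q - 1 else 0) := by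
          refine Finset.sum_le_sum fun v hv => Finset.sum_le_sum fun w _ => ?_
          split_ifs with h
          · subst h
            simp only [inc_sq]
            rw [card_line s v (Finset.ne_of_mem_erase hv)]
            linarith
          · simpa using line_inter hs v w h
      _ = m ^ 2 + (q - 1) * m := by
          have : ∀ v ∈ G.erase 0,
              ∑ w ∈ G.erase 0, (1 + if v = w then q - 1 else 0) = m + (q - 1) := by
            intro v hv
            rw [Finset.sum_add_distrib, Finset.sum_ite_eq, if_pos hv]
            simp [hm]
          rw [Finset.sum_congr rfl this, Finset.sum_const, nsmul_eq_mul]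
          ring
  have h3 : ∑ u : F × F, (∑ v ∈ G.erase 0, inc s u v - n / q) ^ 2 =
      ∑ u : F × F, (∑ v ∈ G.erase 0, inc s u v) ^ 2 - 2 * m * n + n ^ 2 := by
    simp only [sub_sq, Finset.sum_add_distrib, Finset.sum_sub_distrib]
    rw [← Finset.sum_mul, ← Finset.mul_sum, h1]
    simp only [Finset.sum_const, Finset.card_univ, Fintype.card_prod, nsmul_eq_mul, Nat.cast_mul,
      ← hq]
    field_simp
  rw [h3]
  nlinarith [mul_nonneg (sub_nonneg.2 hmn) (sub_nonneg.2 hnm),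
    mul_nonneg (sub_nonneg.2 hmn) (sub_nonneg.2 hq1)]

lemma incidence_lower {F : Type} [Field F] [Fintype F] {s : F} (hs : s ≠ 0)
    (E G : Finset (F × F)) :
    (E.card : ℝ) * G.card / Fintype.card F - √(E.card * (Fintype.card F * G.card)) ≤
      ∑ u ∈ E, ∑ v ∈ G, inc s u v := by
  have h : (∑ u ∈ E, (∑ v ∈ G, inc s u v - (G.card : ℝ) / Fintype.card F)) ^ 2 ≤
      E.card * (Fintype.card F * G.card) :=
    sq_sum_le_card_mul_sum_sq.trans <| mul_le_mul_of_nonneg_left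
      ((Finset.sum_le_univ_sum_of_nonneg fun _ => sq_nonneg _).trans (variance_bound hs G))
      (by positivity)
  have h' := (abs_le.1 (Real.abs_le_sqrt h)).1
  rw [Finset.sum_sub_distrib, Finset.sum_const, nsmul_eq_mul, ← mul_div_assoc] at h'
  linarith

theorem stmt_14 (F : Type) [Field F] [Fintype F]
    (hq : Odd (Fintype.card F)) (A B : Finset F) (t : F) (ht : t ≠ 0) :
    (A.card : ℝ) ^ 2 * (B.card : ℝ) ^ 2 / (Fintype.card F : ℝ) -
        Real.sqrt (Fintype.card F) * (A.card : ℝ) * (B.card : ℝ) ≤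
      (Nat.card {v : F × F × F × F //
        v.1 ∈ A ∧ v.2.1 ∈ B ∧ v.2.2.1 ∈ A ∧ v.2.2.2 ∈ B ∧
          v.1 * v.2.1 + v.2.2.1 * v.2.2.2 = 2 * t} : ℝ) := by
  classical
  have h2 : (2 : F) ≠ 0 := by
    apply Ring.two_ne_zero
    intro h
    have := FiniteField.even_card_of_char_two h
    rw [Nat.odd_iff] at hq
    omega
  have key := incidence_lower (mul_ne_zero h2 ht) (A ×ˢ A) (B ×ˢ B)
  have hcount : (Nat.card {v : F × F × F × F //
        v.1 ∈ A ∧ v.2.1 ∈ B ∧ v.2.2.1 ∈ A ∧ v.2.2.2 ∈ B ∧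
          v.1 * v.2.1 + v.2.2.1 * v.2.2.2 = 2 * t} : ℝ) =
      ∑ u ∈ A ×ˢ A, ∑ v ∈ B ×ˢ B, inc (2 * t) u v := by
    rw [← Finset.sum_product']
    simp only [inc, Finset.sum_boole]
    rw [Nat.card_eq_fintype_card, Fintype.card_subtype]
    norm_cast
    refine Finset.card_bij' (fun v _ => ((v.1, v.2.2.1), (v.2.1, v.2.2.2)))
      (fun p _ => (p.1.1, p.2.1, p.1.2, p.2.2)) ?_ ?_ ?_ ?_
    · simp only [mem_filter, mem_univ, true_and, mem_product]; tauto
    · simp only [mem_filter, mem_univ, true_and, mem_product]; tauto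
    · simp
    · simp
  have hsqrt : √((A.card : ℝ) * A.card * (Fintype.card F * (B.card * B.card))) =
      √(Fintype.card F) * A.card * B.card := by
    rw [show (A.card : ℝ) * A.card * (Fintype.card F * (B.card * B.card)) =
      Fintype.card F * (A.card * B.card : ℝ) ^ 2 by ring, Real.sqrt_mul (by positivity),
      Real.sqrt_sq (by positivity), mul_assoc]
  rw [hcount]
  simp only [Finset.card_product, Nat.cast_mul] at key
  rw [hsqrt] at key
  simpa only [sq] using key
end
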